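/- Let F be a field with char F ≠ 2 and char F ≠ 3, and let γ ∈ F. The 7-dimensional F-algebra 𝕄₇(γ), defined on the basis i, j, k, v, vi, vj, vk by the given anticommutative multiplication table, is a Malcev algebra: it satisfies x·x = 0 for all x and the Malcev identity J(x,y,xz) = J(x,y,z)·x for all x, y, z, where J(x,y,z) = (xy)z + (yz)x + (zx)y. -/

import Mathlib

open TensorProduct

/-- Multiplication of the 7-dimensional simple non-Lie Malcev algebra `M₇(F)`,
realised on `Fin 7 → F`; the index `t` corresponds to the basis element `e_{t+1}`. -/
def m7mul {F : Type*} [Field F] (a b : Fin 7 → F) : Fin 7 → F :=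
  ![(a 1 * b 4 - a 4 * b 1) + (a 2 * b 5 - a 5 * b 2) + (a 3 * b 6 - a 6 * b 3),
    2 * (a 0 * b 1 - a 1 * b 0) - 2 * (a 5 * b 6 - a 6 * b 5),
    2 * (a 0 * b 2 - a 2 * b 0) + 2 * (a 4 * b 6 - a 6 * b 4),
    2 * (a 0 * b 3 - a 3 * b 0) - 2 * (a 4 * b 5 - a 5 * b 4),
    -2 * (a 0 * b 4 - a 4 * b 0) + 2 * (a 2 * b 3 - a 3 * b 2),
    -2 * (a 0 * b 5 - a 5 * b 0) - 2 * (a 1 * b 3 - a 3 * b 1),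
    -2 * (a 0 * b 6 - a 6 * b 0) + 2 * (a 1 * b 2 - a 2 * b 1)]

/-- Multiplication of the 7-dimensional Malcev algebra `𝕄₇(γ)` coming from the
division Cayley–Dickson algebra, realised on `Fin 7 → F`; the indices
`0,…,6` correspond to the basis `i, j, k, v, vi, vj, vk`. -/
def mGammaMul {F : Type*} [Field F] (γ : F) (a b : Fin 7 → F) : Fin 7 → F :=
  ![2 * (a 1 * b 2 - a 2 * b 1) + 2 * γ * (a 3 * b 4 - a 4 * b 3)
      + 2 * γ * (a 5 * b 6 - a 6 * b 5),
    -2 * (a 0 * b 2 - a 2 * b 0) + 2 * γ * (a 3 * b 5 - a 5 * b 3)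
      - 2 * γ * (a 4 * b 6 - a 6 * b 4),
    2 * (a 0 * b 1 - a 1 * b 0) + 2 * γ * (a 3 * b 6 - a 6 * b 3)
      + 2 * γ * (a 4 * b 5 - a 5 * b 4),
    2 * (a 0 * b 4 - a 4 * b 0) + 2 * (a 1 * b 5 - a 5 * b 1)
      + 2 * (a 2 * b 6 - a 6 * b 2),
    -2 * (a 0 * b 3 - a 3 * b 0) - 2 * (a 1 * b 6 - a 6 * b 1)
      + 2 * (a 2 * b 5 - a 5 * b 2),
    2 * (a 0 * b 6 - a 6 * b 0) - 2 * (a 1 * b 3 - a 3 * b 1)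
      - 2 * (a 2 * b 4 - a 4 * b 2),
    -2 * (a 0 * b 5 - a 5 * b 0) + 2 * (a 1 * b 4 - a 4 * b 1)
      - 2 * (a 2 * b 3 - a 3 * b 2)]

/-- The Jacobian `J(x,y,z) = (xy)z + (yz)x + (zx)y` of a multiplication. -/
def malJac {A : Type*} [Add A] (mul : A → A → A) (x y z : A) : A :=
  mul (mul x y) z + mul (mul y z) x + mul (mul z x) y

/-- `mul` is a Malcev multiplication: `x·x = 0` and `J(x,y,xz) = J(x,y,z)·x`. -/
def IsMalcevFun {A : Type*} [AddCommGroup A] (mul : A → A → A) : Prop :=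
  (∀ x, mul x x = 0) ∧
    ∀ x y z, malJac mul x y (mul x z) = mul (malJac mul x y z) x

/-- `e 0, …, e 6` is a copy of the standard basis `e₁, …, e₇` of `M₇(F)`:
linearly independent elements multiplying according to the `M₇(F)` table. -/
def IsM7Copy {F M : Type*} [Field F] [AddCommGroup M] [Module F M]
    (mul : M →ₗ[F] M →ₗ[F] M) (e : Fin 7 → M) : Prop :=
  LinearIndependent F e ∧
  (∀ s t : Fin 7, mul (e s) (e t) = - mul (e t) (e s)) ∧
  mul (e 0) (e 1) = (2 : F) • e 1 ∧
  mul (e 0) (e 2) = (2 : F) • e 2 ∧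
  mul (e 0) (e 3) = (2 : F) • e 3 ∧
  mul (e 0) (e 4) = (-2 : F) • e 4 ∧
  mul (e 0) (e 5) = (-2 : F) • e 5 ∧
  mul (e 0) (e 6) = (-2 : F) • e 6 ∧
  mul (e 1) (e 2) = (2 : F) • e 6 ∧
  mul (e 1) (e 3) = (-2 : F) • e 5 ∧
  mul (e 1) (e 4) = e 0 ∧
  mul (e 1) (e 5) = 0 ∧
  mul (e 1) (e 6) = 0 ∧
  mul (e 2) (e 3) = (2 : F) • e 4 ∧
  mul (e 2) (e 4) = 0 ∧
  mul (e 2) (e 5) = e 0 ∧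
  mul (e 2) (e 6) = 0 ∧
  mul (e 3) (e 4) = 0 ∧
  mul (e 3) (e 5) = 0 ∧
  mul (e 3) (e 6) = e 0 ∧
  mul (e 4) (e 5) = (-2 : F) • e 3 ∧
  mul (e 4) (e 6) = (2 : F) • e 2 ∧
  mul (e 5) (e 6) = (-2 : F) • e 1

/-- `e 0, …, e 6` is a copy of the basis `i, j, k, v, vi, vj, vk` of `𝕄₇(γ)`:
linearly independent elements multiplying according to the `𝕄₇(γ)` table. -/
def IsMGammaCopy {F M : Type*} [Field F] [AddCommGroup M] [Module F M]
    (γ : F) (mul : M →ₗ[F] M →ₗ[F] M) (e : Fin 7 → M) : Prop :=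
  LinearIndependent F e ∧
  (∀ s t : Fin 7, mul (e s) (e t) = - mul (e t) (e s)) ∧
  mul (e 0) (e 1) = (2 : F) • e 2 ∧
  mul (e 0) (e 2) = (-2 : F) • e 1 ∧
  mul (e 0) (e 3) = (-2 : F) • e 4 ∧
  mul (e 0) (e 4) = (2 : F) • e 3 ∧
  mul (e 0) (e 5) = (-2 : F) • e 6 ∧
  mul (e 0) (e 6) = (2 : F) • e 5 ∧
  mul (e 1) (e 2) = (2 : F) • e 0 ∧
  mul (e 1) (e 3) = (-2 : F) • e 5 ∧
  mul (e 1) (e 4) = (2 : F) • e 6 ∧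
  mul (e 1) (e 5) = (2 : F) • e 3 ∧
  mul (e 1) (e 6) = (-2 : F) • e 4 ∧
  mul (e 2) (e 3) = (-2 : F) • e 6 ∧
  mul (e 2) (e 4) = (-2 : F) • e 5 ∧
  mul (e 2) (e 5) = (2 : F) • e 4 ∧
  mul (e 2) (e 6) = (2 : F) • e 3 ∧
  mul (e 3) (e 4) = (2 * γ) • e 0 ∧
  mul (e 3) (e 5) = (2 * γ) • e 1 ∧
  mul (e 3) (e 6) = (2 * γ) • e 2 ∧
  mul (e 4) (e 5) = (2 * γ) • e 2 ∧
  mul (e 4) (e 6) = (-(2 * γ)) • e 1 ∧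
  mul (e 5) (e 6) = (2 * γ) • e 0

/-- The multiplication of the split null extension `E = M ⊕ V` of a Malcev
algebra `M` by a module `V` with representation `ρ`:
`(x + v)(y + w) = xy + (ρ_y v − ρ_x w)`. -/
def sneFun {F M V : Type*} [Field F] [AddCommGroup M] [Module F M]
    [AddCommGroup V] [Module F V]
    (mul : M → M → M) (ρ : M →ₗ[F] Module.End F V) (p q : M × V) : M × V :=
  (mul p.1 q.1, ρ q.1 p.2 - ρ p.1 q.2)

/-- The function `{x,y,z} = (xy)z − (xz)y + 2x(yz)`. -/
def trip (F : Type*) {A : Type*} [Field F] [AddCommGroup A] [Module F A]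
    (mul : A → A → A) (x y z : A) : A :=
  mul (mul x y) z - mul (mul x z) y + (2 : F) • mul x (mul y z)

/-- The function `h(y,z,t,x,u) = {yz,t,u}x + {yz,t,x}u + {yx,z,u}t + {yu,z,x}t`. -/
def hfun (F : Type*) {A : Type*} [Field F] [AddCommGroup A] [Module F A]
    (mul : A → A → A) (y z t x u : A) : A :=
  mul (trip F mul (mul y z) t u) x + mul (trip F mul (mul y z) t x) u
    + mul (trip F mul (mul y x) z u) t + mul (trip F mul (mul y u) z x) t

/-- The function `p(x,y,z,t) = −{zt,x,y} − {yt,z,x} + {xt,y,z}`. -/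
def pfun (F : Type*) {A : Type*} [Field F] [AddCommGroup A] [Module F A]
    (mul : A → A → A) (x y z t : A) : A :=
  - trip F mul (mul z t) x y - trip F mul (mul y t) z x + trip F mul (mul x t) y z

/-- `α` belongs to the centroid `Γ(M)`: `(xα)y = (xy)α = x(yα)` for all `x, y`. -/
def IsCentroidElem {F M : Type*} [Field F] [AddCommGroup M] [Module F M]
    (mul : M →ₗ[F] M →ₗ[F] M) (α : M →ₗ[F] M) : Prop :=
  ∀ x y : M, mul (α x) y = α (mul x y) ∧ mul x (α y) = α (mul x y)

/-!
In an alternative ring the associator `(x, y, z)` is an alternating function, so the Jacobian of the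
commutator bracket is `6 (x, y, z)`. Evaluating the cocycle identity for associators at
`(x, x, z, y)` and at `(y, z, x, x)` computes `(x², y, z)` in two ways,
`(x, y, xz) + x (x, y, z) = (x, y, zx) + (x, y, z) x`, which is the Malcev identity for the bracket
divided by `6`; no division is needed. The Cayley–Dickson double `𝕆 = ℍ ⊕ vℍ` is alternative because
traces and norms of quaternions are central, and forgetting the real part maps `𝕆` with its
commutator bracket onto `𝕄₇(γ)`.
-/

theorem IsMalcevFun.of_surjective {A B : Type*} [AddCommGroup A] [AddCommGroup B]
    {mulA : A → A → A} {mulB : B → B → B} (h : IsMalcevFun mulA) (f : A →+ B)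
    (hf : Function.Surjective f) (hmul : ∀ x y, f (mulA x y) = mulB (f x) (f y)) :
    IsMalcevFun mulB := by
  have map_malJac (x y z : A) : f (malJac mulA x y z) = malJac mulB (f x) (f y) (f z) := by
    simp only [malJac, map_add, hmul]
  refine ⟨hf.forall.2 fun x => ?_, hf.forall₃.2 fun x y z => ?_⟩
  · rw [← hmul, h.1, map_zero]
  · rw [← hmul, ← map_malJac, h.2, hmul, map_malJac]

/-- Alternative (nonassociative) multiplications: a product of three factors does not depend on the
bracketing when two adjacent factors coincide. -/
class IsAlternative (A : Type*) [Mul A] : Prop where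
  mul_self_mul (x y : A) : x * x * y = x * (x * y)
  mul_mul_self (x y : A) : y * x * x = y * (x * x)

section Alternative

variable {A : Type*} [NonUnitalNonAssocRing A]

theorem malJac_lie_eq_associator (x y z : A) :
    malJac (fun a b : A => ⁅a, b⁆) x y z =
      associator x y z - associator y x z + (associator y z x - associator z y x)
        + (associator z x y - associator x z y) := by
  simp only [malJac, Ring.lie_def, associator, sub_mul, mul_sub]
  abel

namespace IsAlternative

variable [IsAlternative A]

theorem associator_self_left (x y : A) : associator x x y = 0 :=
  sub_eq_zero.2 (mul_self_mul x y)

theorem associator_self_right (x y : A) : associator y x x = 0 :=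
  sub_eq_zero.2 (mul_mul_self x y)

theorem associator_swap_left (x y z : A) : associator y x z = -associator x y z := by
  have h : AddMonoidHom.associator (x + y) (x + y) z = 0 := associator_self_left _ _
  simp only [map_add, AddMonoidHom.add_apply, AddMonoidHom.associator_apply,
    associator_self_left, zero_add, add_zero] at h
  exact eq_neg_of_add_eq_zero_left h

theorem associator_swap_right (x y z : A) : associator x z y = -associator x y z := by
  have h : AddMonoidHom.associator x (y + z) (y + z) = 0 := associator_self_right _ _
  simp only [map_add, AddMonoidHom.add_apply, AddMonoidHom.associator_apply,
    associator_self_right, zero_add, add_zero] at h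
  exact eq_neg_of_add_eq_zero_left h

theorem associator_rotate (x y z : A) : associator y z x = associator x y z := by
  rw [associator_swap_right, associator_swap_left, neg_neg]

theorem malJac_lie (x y z : A) :
    malJac (fun a b : A => ⁅a, b⁆) x y z = 6 • associator x y z := by
  rw [malJac_lie_eq_associator, associator_swap_left x y z, associator_swap_right x y z,
    associator_swap_left y z x, associator_rotate x y z, ← associator_rotate z x y]
  abel

theorem associator_mul_self_eq_add_mul_left (x y z : A) :
    associator (x * x) y z = associator x y (x * z) + x * associator x y z := by
  have h := associator_cocycle x x z y
  rw [associator_self_left x (z * y), associator_self_left x z, zero_mul, sub_zero, add_zero,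
    associator_swap_right x y z, associator_swap_right (x * x) y z,
    associator_swap_right x y (x * z)] at h
  linear_combination (norm := (simp only [mul_neg]; abel)) h

theorem associator_mul_self_eq_add_mul_right (x y z : A) :
    associator (x * x) y z = associator x y (z * x) + associator x y z * x := by
  have h := associator_cocycle y z x x
  rw [associator_self_right, associator_self_right, mul_zero, associator_rotate x y z,
    associator_rotate (x * x) y z, associator_rotate x y (z * x)] at h
  linear_combination (norm := abel) -h

theorem associator_lie (x y z : A) : associator x y ⁅x, z⁆ = ⁅associator x y z, x⁆ := by
  have map_lie : associator x y ⁅x, z⁆ = associator x y (x * z) - associator x y (z * x) :=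
    map_sub (AddMonoidHom.associator x y) _ _
  rw [map_lie, Ring.lie_def, sub_eq_sub_iff_add_eq_add, ← associator_mul_self_eq_add_mul_left,
    associator_mul_self_eq_add_mul_right, add_comm]

theorem isMalcevFun_lie : IsMalcevFun fun x y : A => ⁅x, y⁆ := by
  refine ⟨fun x => sub_self (x * x), fun x y z => ?_⟩
  rw [malJac_lie, malJac_lie, associator_lie]
  simp only [Ring.lie_def, smul_sub, smul_mul_assoc, mul_smul_comm]

end IsAlternative

end Alternative

/-- An involution whose traces `a + star a` and norms `a * star a` are central. This is the
condition on an associative ring under which its Cayley–Dickson doubles are alternative. -/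
structure IsCentralInvolution (A : Type*) [NonUnitalRing A] [StarRing A] : Prop where
  commute_add_star (a b : A) : Commute (a + star a) b
  commute_mul_star (a b : A) : Commute (a * star a) b

theorem IsCentralInvolution.star_mul_self {A : Type*} [NonUnitalRing A] [StarRing A]
    (h : IsCentralInvolution A) (a : A) : star a * a = a * star a := by
  have := (h.commute_add_star a a).eq
  rwa [add_mul, mul_add, add_right_inj] at this

/-- The Cayley–Dickson double `A ⊕ vA` of a ring with involution, with `v² = γ`; the pair `⟨a, b⟩`
stands for `a + vb`. The parameter `γ` enters only through the multiplication. -/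
@[ext]
structure CayleyDickson (A : Type*) (γ : A) where
  fst : A
  snd : A

namespace CayleyDickson

section AddCommGroup

variable {A : Type*} {γ : A}

/-- The double as a type of pairs, from which it inherits its additive structure. -/
def equivProd : CayleyDickson A γ ≃ A × A where
  toFun x := (x.fst, x.snd)
  invFun p := ⟨p.1, p.2⟩

variable [AddCommGroup A]

instance : AddCommGroup (CayleyDickson A γ) := equivProd.addCommGroup

@[simp] theorem fst_zero : (0 : CayleyDickson A γ).fst = 0 := rfl

@[simp] theorem snd_zero : (0 : CayleyDickson A γ).snd = 0 := rfl

@[simp] theorem fst_add (x y : CayleyDickson A γ) : (x + y).fst = x.fst + y.fst := rfl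

@[simp] theorem snd_add (x y : CayleyDickson A γ) : (x + y).snd = x.snd + y.snd := rfl

@[simp] theorem fst_sub (x y : CayleyDickson A γ) : (x - y).fst = x.fst - y.fst := rfl

@[simp] theorem snd_sub (x y : CayleyDickson A γ) : (x - y).snd = x.snd - y.snd := rfl

end AddCommGroup

variable {A : Type*} [NonUnitalRing A] [StarRing A] {γ : A}

instance : Mul (CayleyDickson A γ) where
  mul x y := ⟨x.fst * y.fst + γ * (y.snd * star x.snd), star x.fst * y.snd + y.fst * x.snd⟩

@[simp]
theorem fst_mul (x y : CayleyDickson A γ) :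
    (x * y).fst = x.fst * y.fst + γ * (y.snd * star x.snd) := rfl

@[simp]
theorem snd_mul (x y : CayleyDickson A γ) :
    (x * y).snd = star x.fst * y.snd + y.fst * x.snd := rfl

instance : NonUnitalNonAssocRing (CayleyDickson A γ) where
  left_distrib x y z := by
    ext <;> simp only [fst_mul, snd_mul, fst_add, snd_add, mul_add, add_mul] <;> abel
  right_distrib x y z := by
    ext <;> simp only [fst_mul, snd_mul, fst_add, snd_add, mul_add, add_mul, star_add] <;> abel
  zero_mul x := by ext <;> simp
  mul_zero x := by ext <;> simp

theorem mul_self_mul (hA : IsCentralInvolution A) (hγ : ∀ a, Commute γ a)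
    (hγ_star : IsSelfAdjoint γ) (x y : CayleyDickson A γ) : x * x * y = x * (x * y) := by
  obtain ⟨a, b⟩ := x
  obtain ⟨c, d⟩ := y
  ext
  · have htrace := (hA.commute_add_star a (d * star b)).eq
    have hnorm := (hA.commute_mul_star b c).eq
    calc (a * a + γ * (b * star b)) * c + γ * (d * star (star a * b + a * b))
      _ = a * a * c + γ * (b * star b * c + d * star b * (a + star a)) := by
        simp only [star_add, star_mul, star_star, mul_add, add_mul, mul_assoc]
        abel
      _ = a * a * c + γ * (c * (b * star b) + (a + star a) * (d * star b)) := by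
        rw [hnorm, htrace]
      _ = a * (a * c + γ * (d * star b)) + γ * ((star a * d + c * b) * star b) := by
        simp only [mul_add, add_mul, mul_assoc, (hγ a).left_comm]
        abel
  · have htrace := (hA.commute_add_star a c).eq
    have hnorm := (hA.commute_mul_star b d).eq
    calc star (a * a + γ * (b * star b)) * d + c * (star a * b + a * b)
      _ = star a * star a * d + γ * (b * star b * d) + c * (a + star a) * b := by
        rw [star_add, star_mul, star_mul γ, hγ_star.star_eq, ← (hγ _).eq]
        simp only [star_mul, star_star, mul_add, add_mul, mul_assoc]
        abel
      _ = star a * star a * d + γ * (d * (star b * b)) + (a + star a) * c * b := by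
        rw [hnorm, htrace, hA.star_mul_self]
      _ = star a * (star a * d + c * b) + (a * c + γ * (d * star b)) * b := by
        simp only [mul_add, add_mul, mul_assoc]
        abel

theorem mul_mul_self (hA : IsCentralInvolution A) (hγ : ∀ a, Commute γ a)
    (hγ_star : IsSelfAdjoint γ) (x y : CayleyDickson A γ) : y * x * x = y * (x * x) := by
  obtain ⟨a, b⟩ := x
  obtain ⟨c, d⟩ := y
  ext
  · have htrace := (hA.commute_add_star a (b * star d)).eq
    have hnorm := (hA.commute_mul_star b c).eq
    calc (c * a + γ * (b * star d)) * a + γ * (b * star (star c * b + a * d))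
      _ = c * a * a + γ * (b * star b * c + b * star d * (a + star a)) := by
        simp only [star_add, star_mul, star_star, mul_add, add_mul, mul_assoc]
        abel
      _ = c * a * a + γ * (c * (b * star b) + (a + star a) * (b * star d)) := by
        rw [hnorm, htrace]
      _ = c * (a * a + γ * (b * star b)) + γ * ((star a * b + a * b) * star d) := by
        simp only [mul_add, add_mul, mul_assoc, (hγ c).left_comm]
        abel
  · have htrace := (hA.commute_add_star a (star c)).eq
    have hnorm := (hA.commute_mul_star b d).eq
    calc star (c * a + γ * (b * star d)) * b + a * (star c * b + a * d)
      _ = (a + star a) * star c * b + γ * (d * (star b * b)) + a * a * d := by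
        rw [star_add, star_mul, star_mul γ, hγ_star.star_eq, ← (hγ _).eq]
        simp only [star_mul, star_star, mul_add, add_mul, mul_assoc]
        abel
      _ = star c * (a + star a) * b + γ * (b * star b * d) + a * a * d := by
        rw [hnorm, htrace, hA.star_mul_self]
      _ = star c * (star a * b + a * b) + (a * a + γ * (b * star b)) * d := by
        simp only [mul_add, add_mul, mul_assoc]
        abel

theorem isAlternative (hA : IsCentralInvolution A) (hγ : ∀ a, Commute γ a)
    (hγ_star : IsSelfAdjoint γ) : IsAlternative (CayleyDickson A γ) where
  mul_self_mul := mul_self_mul hA hγ hγ_star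
  mul_mul_self := mul_mul_self hA hγ hγ_star

end CayleyDickson

section Quaternion

open scoped Quaternion

theorem isCentralInvolution_quaternionAlgebra {R : Type*} [CommRing R] (c₁ c₂ c₃ : R) :
    IsCentralInvolution ℍ[R,c₁,c₂,c₃] where
  commute_add_star a b := by
    rw [QuaternionAlgebra.self_add_star']
    exact QuaternionAlgebra.coe_commute _ b
  commute_mul_star a b := by
    rw [QuaternionAlgebra.mul_star_eq_coe]
    exact QuaternionAlgebra.coe_commute _ b

/-- The Cayley–Dickson algebra `𝕆 = ℍ ⊕ vℍ` with `v² = γ`, over the quaternions with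
`i² = j² = -1`. -/
abbrev Octonion {R : Type*} [CommRing R] (γ : R) : Type _ := CayleyDickson ℍ[R] (γ : ℍ[R])

namespace Octonion

instance {R : Type*} [CommRing R] (γ : R) : IsAlternative (Octonion γ) :=
  CayleyDickson.isAlternative (isCentralInvolution_quaternionAlgebra _ _ _)
    (Quaternion.coe_commute γ) (Quaternion.star_coe γ)

/-- The projection of `𝕆` modulo the scalars, in coordinates along `i, j, k, v, vi, vj, vk`. -/
@[simps]
def im {R : Type*} [CommRing R] (γ : R) : Octonion γ →+ (Fin 7 → R) where
  toFun x := ![x.fst.imI, x.fst.imJ, x.fst.imK, x.snd.re, x.snd.imI, x.snd.imJ, x.snd.imK]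
  map_zero' := by simp
  map_add' x y := by simp

theorem im_surjective {R : Type*} [CommRing R] (γ : R) : Function.Surjective (im γ) := fun a =>
  ⟨⟨⟨0, a 0, a 1, a 2⟩, ⟨a 3, a 4, a 5, a 6⟩⟩, by ext t; fin_cases t <;> rfl⟩

theorem im_lie {F : Type*} [Field F] (γ : F) (x y : Octonion γ) :
    im γ ⁅x, y⁆ = mGammaMul γ (im γ x) (im γ y) := by
  ext t
  fin_cases t <;>
    simp only [im_apply, mGammaMul, Ring.lie_def, CayleyDickson.fst_sub, CayleyDickson.fst_mul,
      CayleyDickson.snd_sub, CayleyDickson.snd_mul, Quaternion.coe_mul_eq_smul,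
      Quaternion.re_sub, Quaternion.re_add, Quaternion.re_mul, Quaternion.re_star,
      Quaternion.imI_sub, Quaternion.imI_add, Quaternion.imI_mul, Quaternion.imI_smul,
      Quaternion.imI_star, Quaternion.imJ_sub, Quaternion.imJ_add, Quaternion.imJ_mul,
      Quaternion.imJ_smul, Quaternion.imJ_star, Quaternion.imK_sub, Quaternion.imK_add,
      Quaternion.imK_mul, Quaternion.imK_smul, Quaternion.imK_star, smul_eq_mul,
      Fin.zero_eta, Fin.mk_one, Fin.reduceFinMk, Matrix.cons_val] <;>
    ring

end Octonion

end Quaternion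

theorem stmt10_MGamma_is_malcev_general {F : Type*} [Field F] (γ : F) :
    IsMalcevFun (mGammaMul γ) :=
  IsAlternative.isMalcevFun_lie.of_surjective (Octonion.im γ) (Octonion.im_surjective γ)
    (Octonion.im_lie γ)

/-- `𝕄₇(γ)` is a Malcev algebra. -/
theorem stmt10_MGamma_is_malcev
    {F : Type*} [Field F] (h2 : (2 : F) ≠ 0) (h3 : (3 : F) ≠ 0) (γ : F) :
    IsMalcevFun (fun a b : Fin 7 → F => mGammaMul γ a b) :=
  stmt10_MGamma_is_malcev_general γ
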